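/- Let p ≥ 5 be a prime such that the Legendre symbol (3/p) is not equal to the Legendre symbol (−5/p). Then for all nonnegative integers n and α, and for j ∈ {1, 3}, one has b'₅(4·p^(2α)·(5n+j) + (17·p^(2α)+1)/6) ≡ 0 (mod 4). (Note that 17·p^(2α)+1 is divisible by 6 since p² ≡ 1 (mod 6).) -/

import Mathlib

/-- `b5' n` is the number of partitions of `n` into distinct parts,
none of which is divisible by `5` (with `b5' 0 = 1`). -/
def b5' (n : ℕ) : ℕ :=
  ((Nat.Partition.distincts n).filter (fun p => ∀ i ∈ p.parts, ¬ (5 ∣ i))).card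
open PowerSeries
open scoped PowerSeries.WithPiTopology

namespace B5

abbrev S4 : Type := PowerSeries (ZMod 4)

/-- exponent in the Jacobi triple product -/
def eZ (A B : ℕ) (k : ℤ) : ℤ := A * (k * (k - 1) / 2) + B * k

lemma eZ_succ (A B : ℕ) (k : ℤ) : eZ A B k = eZ A B (k - 1) + A * (k - 1) + B := by
  unfold eZ
  have h1 : k * (k - 1) = (k - 1) * (k - 1 - 1) + 2 * (k - 1) := by ring
  have h2 : k * (k - 1) / 2 = (k - 1) * (k - 1 - 1) / 2 + (k - 1) := by
    rw [h1]; omega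
  rw [h2]; ring

lemma two_mul_eZ (A B : ℕ) (k : ℤ) : 2 * eZ A B k = A * (k * (k - 1)) + 2 * B * k := by
  unfold eZ
  have h : 2 * (k * (k - 1) / 2) = k * (k - 1) :=
    Int.mul_ediv_cancel' (by
      have := Int.even_mul_pred_self k
      exact this.two_dvd)
  linear_combination (A : ℤ) * h

lemma eZ_ge (A B : ℕ) (h0 : 0 < B) (hB : B < A) (k : ℤ) : (k.natAbs : ℤ) ≤ eZ A B k := by
  have h := two_mul_eZ A B k
  have hA : (B : ℤ) + 1 ≤ A := by exact_mod_cast hB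
  have hB' : (1 : ℤ) ≤ B := by exact_mod_cast h0
  rcases le_or_gt 0 k with hk | hk
  · have : (k.natAbs : ℤ) = k := by omega
    rw [this]
    rcases eq_or_lt_of_le hk with h1 | h1
    · subst h1; simp at h; omega
    · have h3 : 0 ≤ k * (k - 1) := mul_nonneg hk (by omega)
      nlinarith
  · have : (k.natAbs : ℤ) = -k := by omega
    rw [this]
    have h3 : 0 ≤ (-k) * (-k - 1) := mul_nonneg (by omega) (by omega)
    nlinarith

noncomputable def T (A B : ℕ) (ε : S4) (k : ℤ) : S4 := ε ^ k.natAbs * X ^ (eZ A B k).toNat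

lemma eps_mul {ε : S4} (hε : ε * ε = 1) (k : ℤ) :
    ε * ε ^ (k - 1).natAbs = ε ^ k.natAbs := by
  have h2 : ε ^ 2 = 1 := by rw [pow_two, hε]
  rw [← pow_succ', pow_eq_pow_mod _ h2, pow_eq_pow_mod k.natAbs h2]
  congr 1
  omega

lemma T_up {A B : ℕ} (h0 : 0 < B) (hB : B < A) {ε : S4} (hε : ε * ε = 1) (N : ℕ) (k : ℤ) (a : ℕ)
    (ha : (a : ℤ) = N + 1 - k) :
    ε * X ^ (A * N + B) * T A B ε (k - 1) = X ^ (A * a) * T A B ε k := by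
  unfold T
  have h1 := eZ_ge A B h0 hB k
  have h2 := eZ_ge A B h0 hB (k - 1)
  have h3 := eZ_succ A B k
  have h4 : A * N + B + (eZ A B (k - 1)).toNat = A * a + (eZ A B k).toNat := by
    zify
    rw [Int.toNat_of_nonneg (by omega), Int.toNat_of_nonneg (by omega), h3, ha]
    ring
  calc _ = (ε * ε ^ (k - 1).natAbs) * X ^ (A * N + B + (eZ A B (k - 1)).toNat) := by
        rw [pow_add]; ring
    _ = _ := by rw [eps_mul hε, h4, pow_add]; ring

lemma T_down {A B : ℕ} (h0 : 0 < B) (hB : B < A) {ε : S4} (hε : ε * ε = 1) (N : ℕ) (k : ℤ) (b : ℕ)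
    (hb : (b : ℤ) = N + 1 + k) :
    ε * X ^ (A * N + (A - B)) * T A B ε (k + 1) = X ^ (A * b) * T A B ε k := by
  unfold T
  have h1 := eZ_ge A B h0 hB k
  have h2 := eZ_ge A B h0 hB (k + 1)
  have h3 := eZ_succ A B (k + 1)
  rw [add_sub_cancel_right] at h3
  have h4 : A * N + (A - B) + (eZ A B (k + 1)).toNat = A * b + (eZ A B k).toNat := by
    zify
    rw [Int.toNat_of_nonneg (by omega), Int.toNat_of_nonneg (by omega), h3, hb, Nat.cast_sub hB.le]
    ring
  have h5 : ε * ε ^ (k + 1).natAbs = ε ^ k.natAbs := by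
    have := eps_mul hε (k + 1)
    rw [← this, add_sub_cancel_right, ← mul_assoc, hε, one_mul]
  calc _ = (ε * ε ^ (k + 1).natAbs) * X ^ (A * N + (A - B) + (eZ A B (k + 1)).toNat) := by
        rw [pow_add]; ring
    _ = _ := by rw [h5, h4, pow_add]; ring

noncomputable def qf (A m : ℕ) : S4 := ∏ i ∈ Finset.range m, (1 - X ^ (A * (i + 1)))

lemma qf_succ (A m : ℕ) : qf A (m + 1) = qf A m * (1 - X ^ (A * (m + 1))) :=
  Finset.prod_range_succ _ _

lemma qf_unit {A : ℕ} (hA : 0 < A) (m : ℕ) : IsUnit (qf A m) := by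
  rw [isUnit_iff_constantCoeff]
  unfold qf
  rw [map_prod]
  convert isUnit_one
  apply Finset.prod_eq_one
  intro i _
  have : A * (i + 1) ≠ 0 := by positivity
  simp [this]

noncomputable def u (A : ℕ) (z : ℤ) : S4 := if z < 0 then 0 else Ring.inverse (qf A z.toNat)

lemma u_nat_mul {A : ℕ} (hA : 0 < A) (m : ℕ) : u A m * qf A m = 1 := by
  simp [u, Ring.inverse_mul_cancel _ (qf_unit hA m)]

lemma u_pred {A : ℕ} (hA : 0 < A) (m : ℕ) : u A ((m : ℤ) - 1) = (1 - X ^ (A * m)) * u A m := by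
  cases m with
  | zero => simp [u]
  | succ n =>
    have h1 := u_nat_mul hA n
    have h2 := u_nat_mul hA (n + 1)
    rw [qf_succ] at h2
    have h3 : (((n + 1 : ℕ) : ℤ) - 1) = (n : ℤ) := by push_cast; ring
    rw [h3]
    calc u A n = u A n * (u A (n + 1 : ℕ) * (qf A n * (1 - X ^ (A * (n + 1))))) := by rw [h2, mul_one]
      _ = (u A n * qf A n) * ((1 - X ^ (A * (n + 1))) * u A (n + 1 : ℕ)) := by ring
      _ = _ := by rw [h1, one_mul]

lemma u_pred2 {A : ℕ} (hA : 0 < A) (m : ℕ) :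
    X ^ A * u A ((m : ℤ) - 2) = (X ^ A - X ^ (A * m)) * ((1 - X ^ (A * m)) * u A m) := by
  cases m with
  | zero => simp [u]
  | succ n =>
    have h1 := u_pred hA n
    have h2 := u_pred hA (n + 1)
    have h3 : (((n + 1 : ℕ) : ℤ) - 2) = (n : ℤ) - 1 := by push_cast; ring
    have h4 : (((n + 1 : ℕ) : ℤ) - 1) = (n : ℤ) := by push_cast; ring
    rw [h4] at h2
    rw [h3, h1, h2, mul_add A n 1, pow_add, mul_one]
    ring

noncomputable def g (A B : ℕ) (ε : S4) (N : ℕ) (k : ℤ) : S4 :=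
  qf A (2 * N) * u A (N - k) * u A (N + k) * T A B ε k

lemma g_step {A B : ℕ} (h0 : 0 < B) (hB : B < A) {ε : S4} (hε : ε * ε = 1) (N : ℕ) (k : ℤ) :
    g A B ε (N + 1) k = (1 + X ^ (A * (2 * N + 1))) * g A B ε N k
      + ε * X ^ (A * N + B) * g A B ε N (k - 1)
      + ε * X ^ (A * N + (A - B)) * g A B ε N (k + 1) := by
  have hA : 0 < A := by omega
  have hneg : ∀ z : ℤ, z < 0 → u A z = 0 := fun z hz => by simp [u, hz]
  by_cases ha : (N : ℤ) + 1 - k < 0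
  · simp only [g]
    rw [hneg (((N + 1 : ℕ) : ℤ) - k) (by push_cast; omega), hneg ((N : ℤ) - k) (by omega),
      hneg ((N : ℤ) - (k - 1)) (by omega), hneg ((N : ℤ) - (k + 1)) (by omega)]
    ring
  by_cases hb : (N : ℤ) + 1 + k < 0
  · simp only [g]
    rw [hneg (((N + 1 : ℕ) : ℤ) + k) (by push_cast; omega), hneg ((N : ℤ) + k) (by omega),
      hneg ((N : ℤ) + (k - 1)) (by omega), hneg ((N : ℤ) + (k + 1)) (by omega)]
    ring
  obtain ⟨a, ha'⟩ := Int.eq_ofNat_of_zero_le (not_lt.mp ha)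
  obtain ⟨b, hb'⟩ := Int.eq_ofNat_of_zero_le (not_lt.mp hb)
  have hT1 := T_up h0 hB hε N k a ha'.symm
  have hT2 := T_down h0 hB hε N k b hb'.symm
  have ha1 := u_pred hA a
  have ha2 := u_pred2 hA a
  have hb1 := u_pred hA b
  have hb2 := u_pred2 hA b
  have hQ : (X : S4) ^ A * X ^ (A * (2 * N + 1)) = X ^ (A * a) * X ^ (A * b) := by
    rw [← pow_add, ← pow_add]
    congr 1
    have : a + b = 2 * N + 2 := by omega
    rw [← mul_add, this]; ring
  have hq : qf A (2 * (N + 1)) = qf A (2 * N) * (1 - X ^ (A * (2 * N + 1)))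
      * (1 - X ^ A * X ^ (A * (2 * N + 1))) := by
    rw [show 2 * (N + 1) = 2 * N + 1 + 1 by ring, qf_succ, qf_succ, ← pow_add]
    congr 3
    ring
  simp only [g]
  rw [hq, show (((N + 1 : ℕ) : ℤ) - k) = (a : ℤ) by push_cast; omega,
    show (((N + 1 : ℕ) : ℤ) + k) = (b : ℤ) by push_cast; omega,
    show ((N : ℤ) - k) = (a : ℤ) - 1 by omega, show ((N : ℤ) + k) = (b : ℤ) - 1 by omega,
    show ((N : ℤ) - (k - 1)) = (a : ℤ) by omega, show ((N : ℤ) + (k - 1)) = (b : ℤ) - 2 by omega,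
    show ((N : ℤ) - (k + 1)) = (a : ℤ) - 2 by omega, show ((N : ℤ) + (k + 1)) = (b : ℤ) by omega]
  apply X_pow_mul_cancel (k := A)
  rw [ha1, hb1]
  generalize (X : S4) ^ A = Q at *
  generalize (X : S4) ^ (A * (2 * N + 1)) = q1 at *
  generalize (X : S4) ^ (A * a) = α at *
  generalize (X : S4) ^ (A * b) = β at *
  generalize u A a = ua at *
  generalize u A b = ub at *
  generalize u A ((a : ℤ) - 2) = ua2 at *
  generalize u A ((b : ℤ) - 2) = ub2 at *
  generalize qf A (2 * N) = w at *
  generalize T A B ε k = t at *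
  have e1 : Q * (ε * X ^ (A * N + B) * (w * ua * ub2 * T A B ε (k - 1)))
      = w * ua * ((Q - β) * ((1 - β) * ub)) * (α * t) := by
    rw [← hT1, ← hb2]; ring
  have e2 : Q * (ε * X ^ (A * N + (A - B)) * (w * ua2 * ub * T A B ε (k + 1)))
      = w * ub * ((Q - α) * ((1 - α) * ua)) * (β * t) := by
    rw [← hT2, ← ha2]; ring
  rw [mul_add, mul_add, e1, e2]
  linear_combination (w * ua * ub * t) * (-1 - Q + Q * q1 + α * β - (1 - α) * (1 - β)) * hQ

lemma hasSum_shift {R : Type*} [CommRing R] [TopologicalSpace R] [IsTopologicalRing R]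
    {g0 g1 : ℤ → R} {L : R} (h : HasSum g0 L) (c x y : R)
    (hg : ∀ k, g1 k = c * g0 k + x * g0 (k - 1) + y * g0 (k + 1)) (M : R)
    (hM : M = c + x + y) : HasSum g1 (L * M) := by
  have s1 : HasSum (fun k => g0 (k - 1)) L := (Equiv.subRight (1 : ℤ)).hasSum_iff.mpr h
  have s2 : HasSum (fun k => g0 (k + 1)) L := (Equiv.addRight (1 : ℤ)).hasSum_iff.mpr h
  have h := ((h.mul_left c).add (s1.mul_left x)).add (s2.mul_left y)
  rw [← funext hg] at h
  rw [show L * M = c * L + x * L + y * L by rw [hM]; ring]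
  exact h

lemma alg_aux {R : Type*} [CommRing R] (ε x y : R) (h : ε * ε = 1) :
    (1 + ε * x) * (1 + ε * y) = 1 + x * y + ε * x + ε * y := by
  linear_combination x * y * h

lemma exp_aux (A B N : ℕ) (h : B ≤ A) : A * (2 * N + 1) = A * N + B + (A * N + (A - B)) := by
  obtain ⟨C, rfl⟩ := Nat.exists_eq_add_of_le h
  rw [Nat.add_sub_cancel_left]
  ring

lemma jtp_finite {A B : ℕ} (h0 : 0 < B) (hB : B < A) {ε : S4} (hε : ε * ε = 1) (N : ℕ) :
    HasSum (g A B ε N) (∏ i ∈ Finset.range N,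
      ((1 + ε * X ^ (A * i + B)) * (1 + ε * X ^ (A * i + (A - B))))) := by
  induction N with
  | zero =>
    have hA : 0 < A := by omega
    have := hasSum_single (f := g A B ε 0) 0 (by
      intro k hk
      rcases lt_or_gt_of_ne hk with h | h
      · simp [g, u, h]
      · simp [g, u, h])
    convert this using 1
    have := u_nat_mul hA 0
    simp [g, T, eZ, qf] at this ⊢
    simp [this]
  | succ N ih =>
    rw [Finset.prod_range_succ]
    have e : (X : S4) ^ (A * (2 * N + 1)) = X ^ (A * N + B) * X ^ (A * N + (A - B)) := by
      rw [← pow_add, exp_aux A B N hB.le]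
    refine hasSum_shift ih _ _ _ (g_step h0 hB hε N) _ ?_
    rw [e]
    exact alg_aux _ _ _ hε

lemma eventually_coeff {s : ℕ → S4} {a : S4} (h : Filter.Tendsto s Filter.atTop (nhds a)) (d : ℕ) :
    ∀ᶠ N in Filter.atTop, coeff d (s N) = coeff d a := by
  have h1 := (WithPiTopology.tendsto_iff_coeff_tendsto (ZMod 4) _ _ _).mp h d
  rw [nhds_discrete, Filter.tendsto_pure] at h1
  exact h1

lemma qf_dvd {A : ℕ} (hA : 0 < A) (m j : ℕ) : (X : S4) ^ (m + 1) ∣ qf A (m + j) - qf A m := by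
  induction j with
  | zero => simp
  | succ j ih =>
    have h : qf A (m + (j + 1)) - qf A m = (qf A (m + j) - qf A m)
        - qf A (m + j) * X ^ (A * (m + j + 1)) := by
      rw [← add_assoc, qf_succ]; ring
    rw [h]
    refine dvd_sub ih (Dvd.dvd.mul_left (pow_dvd_pow _ ?_) _)
    nlinarith

lemma qf_lim_dvd {A : ℕ} (hA : 0 < A) {F : S4}
    (hF : HasProd (fun i : ℕ => (1 - X ^ (A * (i + 1)) : S4)) F) (m : ℕ) :
    (X : S4) ^ (m + 1) ∣ F - qf A m := by
  rw [X_pow_dvd_iff]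
  intro d hd
  have h1 : Filter.Tendsto (fun N => qf A N) Filter.atTop (nhds F) := hF.tendsto_prod_nat
  obtain ⟨N, hN, hN2⟩ := ((eventually_coeff h1 d).and (Filter.eventually_ge_atTop m)).exists
  obtain ⟨j, rfl⟩ := Nat.exists_eq_add_of_le hN2
  have h2 := (X_pow_dvd_iff.mp (qf_dvd hA m j)) d hd
  rw [map_sub] at h2 ⊢
  rw [← hN, h2]

lemma cancel_aux {R : Type*} [CommRing R] (D F a b c ua ub : R) (ha : D ∣ F - a) (hb : D ∣ c - b)
    (hua : ua * a = 1) (hub : ub * b = 1) : D ∣ F * (c * ua * ub) - 1 := by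
  obtain ⟨r, hr⟩ := ha
  obtain ⟨s, hs⟩ := hb
  refine ⟨r * c * ua * ub + s * ub, ?_⟩
  linear_combination (c * ua * ub) * hr + ub * hs + (c * ub) * hua + hub

lemma coeff_g {A B : ℕ} (h0 : 0 < B) (hB : B < A) {ε : S4} {F : S4}
    (hF : HasProd (fun i : ℕ => (1 - X ^ (A * (i + 1)) : S4)) F) (N d : ℕ) (hd : d ≤ N) (k : ℤ) :
    coeff d (F * g A B ε N k) = coeff d (T A B ε k) := by
  have hA : 0 < A := by omega
  have he := eZ_ge A B h0 hB k
  have hT : (X : S4) ^ k.natAbs ∣ T A B ε k := by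
    unfold T
    exact Dvd.dvd.mul_left (pow_dvd_pow _ (by omega)) _
  suffices h : (X : S4) ^ (N + 1) ∣ F * g A B ε N k - T A B ε k by
    have := X_pow_dvd_iff.mp h d (by omega)
    rw [map_sub, sub_eq_zero] at this
    exact this
  by_cases hk : N < k.natAbs
  · have hg : g A B ε N k = 0 := by
      unfold g
      rcases le_or_gt 0 k with h | h
      · have : (N : ℤ) - k < 0 := by omega
        simp [u, this]
      · have : (N : ℤ) + k < 0 := by omega
        simp [u, this]
    rw [hg, mul_zero, zero_sub, dvd_neg]
    exact (pow_dvd_pow _ (by omega)).trans hT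
  · obtain ⟨a, ha⟩ := Int.eq_ofNat_of_zero_le (show 0 ≤ (N : ℤ) - k by omega)
    obtain ⟨b, hb⟩ := Int.eq_ofNat_of_zero_le (show 0 ≤ (N : ℤ) + k by omega)
    have h1 : (X : S4) ^ (N - k.natAbs + 1) ∣ F - qf A a :=
      (pow_dvd_pow _ (by omega)).trans (qf_lim_dvd hA hF a)
    have h2 : (X : S4) ^ (N - k.natAbs + 1) ∣ qf A (2 * N) - qf A b := by
      have := qf_dvd hA b (2 * N - b)
      rw [show b + (2 * N - b) = 2 * N by omega] at this
      exact (pow_dvd_pow _ (by omega)).trans this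
    have h3 := cancel_aux _ _ _ _ _ _ _ h1 h2 (u_nat_mul hA a) (u_nat_mul hA b)
    have h4 : F * g A B ε N k - T A B ε k
        = (F * (qf A (2 * N) * u A a * u A b) - 1) * T A B ε k := by
      unfold g
      rw [ha, hb]
      ring
    rw [h4, show N + 1 = (N - k.natAbs + 1) + k.natAbs by omega, pow_add]
    exact mul_dvd_mul h3 hT

theorem jtp {A B : ℕ} (h0 : 0 < B) (hB : B < A) {ε : S4} (hε : ε * ε = 1) {F Pa Pb : S4}
    (hF : HasProd (fun i : ℕ => (1 - X ^ (A * (i + 1)) : S4)) F)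
    (ha : HasProd (fun i : ℕ => (1 + ε * X ^ (A * i + B) : S4)) Pa)
    (hb : HasProd (fun i : ℕ => (1 + ε * X ^ (A * i + (A - B)) : S4)) Pb) :
    HasSum (T A B ε) (F * (Pa * Pb)) := by
  rw [WithPiTopology.hasSum_iff_hasSum_coeff]
  intro d
  have h1 := ((ha.mul hb).tendsto_prod_nat).const_mul F
  obtain ⟨N, hN, hN2⟩ := ((eventually_coeff h1 d).and (Filter.eventually_ge_atTop d)).exists
  have h2 := (jtp_finite h0 hB hε N).mul_left F
  have h3 := (WithPiTopology.hasSum_iff_hasSum_coeff (ZMod 4)).mp h2 d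
  rw [← hN]
  rw [funext (coeff_g h0 hB hF N d hN2)] at h3
  exact h3

lemma continuous_expand (k : ℕ) (hk : k ≠ 0) :
    Continuous (expand k hk : S4 → S4) := by
  rw [continuous_iff_continuousAt]
  intro F
  unfold ContinuousAt
  rw [WithPiTopology.tendsto_iff_coeff_tendsto]
  intro d
  simp only [coeff_expand]
  by_cases h : k ∣ d
  · simp only [h, if_true]
    exact (WithPiTopology.continuous_coeff (ZMod 4) (d / k)).continuousAt
  · simp only [h, if_false]
    exact tendsto_const_nhds

noncomputable def E (k : ℕ) [NeZero k] : S4 →+* S4 := (expand k (NeZero.ne k)).toRingHom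

lemma continuous_E (k : ℕ) [NeZero k] : Continuous (E k) := continuous_expand k _

lemma E_X (k : ℕ) [NeZero k] : E k X = X ^ k := expand_X k _

lemma E_E (a b c : ℕ) [NeZero a] [NeZero b] [NeZero c] (h : a * b = c) (F : S4) :
    E a (E b F) = E c F := by
  subst h
  exact (expand_mul a (NeZero.ne a) b (NeZero.ne b) F).symm

lemma coeff_E (k : ℕ) [NeZero k] (F : S4) (n : ℕ) :
    coeff n (E k F) = if k ∣ n then coeff (n / k) F else 0 := coeff_expand k _ F

noncomputable def f : S4 := pentagonalSeries (ZMod 4)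

lemma hasProd_f : HasProd (fun n : ℕ => (1 - X ^ (n + 1) : S4)) f :=
  WithPiTopology.hasProd_one_sub_X_pow (ZMod 4)

lemma hasProd_Ef (k : ℕ) [NeZero k] : HasProd (fun n : ℕ => (1 - X ^ (k * (n + 1)) : S4)) (E k f) := by
  have h := hasProd_f.map (E k) (continuous_E k)
  have e : (E k ∘ fun n : ℕ => (1 - X ^ (n + 1) : S4)) = fun n : ℕ => (1 - X ^ (k * (n + 1)) : S4) := by
    funext n
    simp [E_X, ← pow_mul]
  rw [e] at h
  exact h

noncomputable def AP (ε : S4) (A B : ℕ) : S4 := ∏' i : ℕ, (1 + ε * X ^ (A * i + B))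

lemma hasProd_AP (ε : S4) {A : ℕ} (hA : 0 < A) (B : ℕ) :
    HasProd (fun i : ℕ => (1 + ε * X ^ (A * i + B))) (AP ε A B) := by
  apply Multipliable.hasProd
  apply WithPiTopology.multipliable_one_add_of_tendsto_order_atTop_nhds_top
  refine tendsto_nhds_top_mono ENat.tendsto_natCast_nhds_top ?_
  refine Filter.Eventually.of_forall fun n => ?_
  apply le_order
  intro i hi
  have hi' : i < n := by exact_mod_cast hi
  rw [coeff_mul_X_pow', if_neg]
  nlinarith

lemma hasProd_ind (ε : S4) {A B : ℕ} (h0 : 0 < B) (hB : B ≤ A) :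
    HasProd (fun n : ℕ => if n % A = B - 1 then 1 + ε * X ^ (n + 1) else 1) (AP ε A B) := by
  have hA : 0 < A := by omega
  have hinj : Function.Injective (fun i : ℕ => A * i + (B - 1)) := by
    intro a b h
    simp only [add_left_inj] at h
    exact Nat.eq_of_mul_eq_mul_left hA h
  rw [← hinj.hasProd_iff]
  · convert hasProd_AP ε hA B using 1
    funext i
    have h1 : (A * i + (B - 1)) % A = B - 1 := by
      rw [Nat.mul_add_mod]; exact Nat.mod_eq_of_lt (by omega)
    simp only [Function.comp, h1, if_true]
    rw [add_assoc, Nat.sub_add_cancel h0]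
  · intro x hx
    rw [if_neg]
    intro h
    exact hx ⟨x / A, by simp only []; rw [← h]; exact Nat.div_add_mod x A⟩

lemma E_AP (k : ℕ) [NeZero k] (ε : S4) (hε : E k ε = ε) {A : ℕ} (hA : 0 < A) (B : ℕ) :
    E k (AP ε A B) = AP ε (k * A) (k * B) := by
  have h := (hasProd_AP ε hA B).map (E k) (continuous_E k)
  refine h.unique ?_
  have h2 := hasProd_AP ε (A := k * A) (Nat.mul_pos (NeZero.pos k) hA) (k * B)
  convert h2 using 1
  funext n
  simp only [Function.comp, map_add, map_mul, map_one, map_pow, E_X, hε, ← pow_mul]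
  ring_nf

/-- product of `1 + q ^ n` -/
noncomputable def P : S4 := AP 1 1 1

lemma hasProd_P : HasProd (fun n : ℕ => (1 + X ^ (n + 1) : S4)) P := by
  have h := hasProd_AP 1 (A := 1) one_pos 1
  simp only [one_mul] at h
  exact h

lemma P_mul_f : P * f = E 2 f := by
  refine (hasProd_P.mul hasProd_f).unique ?_
  convert hasProd_Ef 2 using 1
  funext n
  ring

lemma split_P : P = AP 1 2 1 * E 2 P := by
  have e : E 2 P = AP 1 2 2 := E_AP 2 1 (map_one _) one_pos 1
  rw [e]
  refine hasProd_P.unique ?_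
  convert (hasProd_ind 1 (A := 2) (B := 1) (by norm_num) (by norm_num)).mul
    (hasProd_ind 1 (A := 2) (B := 2) (by norm_num) (by norm_num)) using 1
  funext n
  rcases Nat.mod_two_eq_zero_or_one n with h | h <;> simp [h]

lemma split_D : AP 1 2 1 = AP 1 4 1 * AP 1 4 3 := by
  refine (hasProd_ind 1 (A := 2) (B := 1) (by norm_num) (by norm_num)).unique ?_
  convert (hasProd_ind 1 (A := 4) (B := 1) (by norm_num) (by norm_num)).mul
    (hasProd_ind 1 (A := 4) (B := 3) (by norm_num) (by norm_num)) using 1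
  funext n
  have : n % 4 = 0 ∨ n % 4 = 1 ∨ n % 4 = 2 ∨ n % 4 = 3 := by omega
  rcases this with h | h | h | h
  · have h2 : n % 2 = 0 := by omega
    simp [h, h2]
  · have h2 : n % 2 = 1 := by omega
    simp [h, h2]
  · have h2 : n % 2 = 0 := by omega
    simp [h, h2]
  · have h2 : n % 2 = 1 := by omega
    simp [h, h2]

lemma split_f : f = AP (-1) 2 1 * E 2 f := by
  have h2 : E 2 f = AP (-1) 2 2 := by
    refine (hasProd_Ef 2).unique ?_
    convert hasProd_AP (-1) (A := 2) two_pos 2 using 1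
    funext n
    ring
  rw [h2]
  refine hasProd_f.unique ?_
  convert (hasProd_ind (-1) (A := 2) (B := 1) (by norm_num) (by norm_num)).mul
    (hasProd_ind (-1) (A := 2) (B := 2) (by norm_num) (by norm_num)) using 1
  funext n
  rcases Nat.mod_two_eq_zero_or_one n with h | h <;> simp [h, sub_eq_add_neg]

/-- generating function -/
noncomputable def G : S4 := PowerSeries.mk fun n => (b5' n : ZMod 4)

lemma hasProd_G : HasProd (fun n : ℕ => if 5 ∣ n + 1 then 1 else (1 + X ^ (n + 1) : S4)) G := by
  classical
  have h := Nat.Partition.hasProd_genFun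
    (fun i c => if c ≤ 1 ∧ ¬ 5 ∣ i then (1 : ZMod 4) else 0)
  convert! h using 1
  · funext i
    rw [tsum_eq_single 0]
    · by_cases h5 : 5 ∣ i + 1 <;> simp [h5]
    · intro j hj
      rw [if_neg (by omega), zero_smul]
  · ext n
    rw [Nat.Partition.coeff_genFun, G, coeff_mk, b5']
    simp_rw [Finsupp.prod, Finset.prod_boole]
    rw [Nat.Partition.distincts, Finset.filter_filter, Finset.card_filter, Nat.cast_sum]
    refine Finset.sum_congr rfl fun p _ => ?_
    rw [Nat.cast_ite, Nat.cast_one, Nat.cast_zero]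
    congr 1
    simp only [eq_iff_iff]
    constructor
    · rintro ⟨h1, h2⟩ i hi
      have hi' : i ∈ p.parts := by simpa using hi
      refine ⟨?_, h2 i hi'⟩
      simpa using Multiset.nodup_iff_count_le_one.mp h1 i
    · intro h1
      constructor
      · rw [Multiset.nodup_iff_count_le_one]
        intro i
        by_cases hi : i ∈ p.parts
        · simpa using (h1 i (by simpa using hi)).1
        · rw [Multiset.count_eq_zero_of_notMem hi]; norm_num
      · intro i hi
        exact (h1 i (by simpa using hi)).2

lemma G_mul_P : P = G * E 5 P := by
  have e : E 5 P = AP 1 5 5 := E_AP 5 1 (map_one _) one_pos 1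
  rw [e]
  refine hasProd_P.unique ?_
  convert hasProd_G.mul (hasProd_ind 1 (A := 5) (B := 5) (by norm_num) (by norm_num)) using 1
  funext n
  by_cases h : 5 ∣ n + 1
  · have : n % 5 = 4 := by omega
    simp [h, this]
  · have : n % 5 ≠ 4 := by omega
    simp [h, this]

lemma G_split : G = (AP 1 5 1 * AP 1 5 4) * (AP 1 5 2 * AP 1 5 3) := by
  refine hasProd_G.unique ?_
  have h := fun (B : ℕ) (h0 : 0 < B) (h1 : B ≤ 5) => hasProd_ind 1 h0 h1
  convert ((h 1 (by norm_num) (by norm_num)).mul (h 4 (by norm_num) (by norm_num))).mul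
    ((h 2 (by norm_num) (by norm_num)).mul (h 3 (by norm_num) (by norm_num))) using 1
  funext n
  have : n % 5 = 0 ∨ n % 5 = 1 ∨ n % 5 = 2 ∨ n % 5 = 3 ∨ n % 5 = 4 := by omega
  rcases this with h | h | h | h | h
  · have h2 : ¬ 5 ∣ n + 1 := by omega
    simp [h, h2]
  · have h2 : ¬ 5 ∣ n + 1 := by omega
    simp [h, h2]
  · have h2 : ¬ 5 ∣ n + 1 := by omega
    simp [h, h2]
  · have h2 : ¬ 5 ∣ n + 1 := by omega
    simp [h, h2]
  · have h2 : 5 ∣ n + 1 := by omega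
    simp [h, h2]

/-! theta series -/
noncomputable def phi : S4 := E 2 f * (AP 1 2 1 * AP 1 2 1)
noncomputable def psi : S4 := E 4 f * (AP 1 4 1 * AP 1 4 3)
noncomputable def th1 : S4 := E 5 f * (AP 1 5 1 * AP 1 5 4)
noncomputable def th2 : S4 := E 5 f * (AP 1 5 2 * AP 1 5 3)

lemma hasSum_T (A B C : ℕ) [NeZero A] (h0 : 0 < B) (hB : B < A) (hC : A - B = C) (ε : S4)
    (hε : ε * ε = 1) : HasSum (T A B ε) (E A f * (AP ε A B * AP ε A C)) := by
  subst hC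
  exact jtp h0 hB hε (hasProd_Ef A) (hasProd_AP ε (NeZero.pos A) _) (hasProd_AP ε (NeZero.pos A) _)

lemma T_one (A B : ℕ) : T A B 1 = fun k => X ^ (eZ A B k).toNat := by
  funext k; simp [T]

lemma hasSum_phi : HasSum (fun k : ℤ => (X ^ (eZ 2 1 k).toNat : S4)) phi := by
  rw [← T_one]; exact hasSum_T 2 1 1 (by norm_num) (by norm_num) (by norm_num) 1 (by simp)

lemma hasSum_psi : HasSum (fun k : ℤ => (X ^ (eZ 4 1 k).toNat : S4)) psi := by
  rw [← T_one]; exact hasSum_T 4 1 3 (by norm_num) (by norm_num) (by norm_num) 1 (by simp)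

lemma hasSum_th1 : HasSum (fun k : ℤ => (X ^ (eZ 5 1 k).toNat : S4)) th1 := by
  rw [← T_one]; exact hasSum_T 5 1 4 (by norm_num) (by norm_num) (by norm_num) 1 (by simp)

lemma hasSum_th2 : HasSum (fun k : ℤ => (X ^ (eZ 5 2 k).toNat : S4)) th2 := by
  rw [← T_one]; exact hasSum_T 5 2 3 (by norm_num) (by norm_num) (by norm_num) 1 (by simp)

lemma G_mul_sq : G * (E 5 f) ^ 2 = th1 * th2 := by
  rw [G_split, th1, th2]; ring

lemma psi_mul_f : psi * f = (E 2 f) ^ 2 := by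
  have h1 := congrArg (E 2) P_mul_f
  rw [map_mul, E_E 2 2 4 (by norm_num)] at h1
  rw [psi, ← split_D, ← h1]
  have h2 := split_P
  calc E 2 P * E 2 f * AP 1 2 1 * f = (AP 1 2 1 * E 2 P) * f * E 2 f := by ring
    _ = _ := by rw [← h2, P_mul_f]; ring

lemma G_mul : G * f * E 10 f = E 2 f * E 5 f := by
  have h1 := congrArg (E 5) P_mul_f
  rw [map_mul, E_E 5 2 10 (by norm_num)] at h1
  have h2 := G_mul_P
  calc G * f * E 10 f = (G * E 5 P) * f * E 5 f := by rw [← h1]; ring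
    _ = _ := by rw [← h2, P_mul_f]

lemma four_S : (4 : S4) = 0 := by
  have h : (4 : ZMod 4) = 0 := by decide
  calc (4 : S4) = C (4 : ZMod 4) := (map_ofNat C 4).symm
    _ = 0 := by rw [h, map_zero]

noncomputable def M (e : ℤ) : S4 := X ^ e.toNat

lemma M_mul {a b : ℤ} (ha : 0 ≤ a) (hb : 0 ≤ b) : M a * M b = M (a + b) := by
  unfold M
  rw [← pow_add, Int.toNat_add ha hb]

lemma M_zero : M 0 = 1 := by simp [M]

lemma E_M (k : ℕ) [NeZero k] (a : ℤ) : E k (M a) = M (k * a) := by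
  unfold M
  rw [map_pow, E_X, ← pow_mul]
  congr 1
  rcases le_or_gt 0 a with h | h
  · zify
    rw [Int.toNat_of_nonneg h, Int.toNat_of_nonneg (by positivity)]
  · have h2 : (k : ℤ) * a ≤ 0 := by
      have : (0 : ℤ) < k := by exact_mod_cast NeZero.pos k
      nlinarith
    rw [Int.toNat_of_nonpos h.le, Int.toNat_of_nonpos h2, mul_zero]

lemma hasSum_E {ι : Type*} {e : ι → ℤ} {a : S4} (k : ℕ) [NeZero k] (h : HasSum (fun i => M (e i)) a) :
    HasSum (fun i => M (k * e i)) (E k a) := by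
  have h2 := h.map (E k) (continuous_E k)
  have h3 : (E k ∘ fun i => M (e i)) = fun i => M (k * e i) := by
    funext i; exact E_M k _
  rwa [h3] at h2

lemma hasSum_split {R α β γ : Type*} [CommRing R] [TopologicalSpace R] [IsTopologicalRing R]
    {F : γ → R} {a b : R} (i : α → γ) (j : β → γ) (hi : i.Injective) (hj : j.Injective)
    (h : ∀ x, x ∈ Set.range i ↔ x ∉ Set.range j)
    (ha : HasSum (fun x => F (i x)) a) (hb : HasSum (fun x => F (j x)) b) : HasSum F (a + b) := by
  have hc : IsCompl (Set.range i) (Set.range j) := by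
    rw [← eq_compl_iff_isCompl]
    ext x; exact h x
  exact HasSum.add_isCompl hc (hi.hasSum_range_iff.mpr ha) (hj.hasSum_range_iff.mpr hb)

lemma eZ21 (k : ℤ) : eZ 2 1 k = k * k := by
  have := two_mul_eZ 2 1 k
  push_cast at this
  nlinarith

lemma eZ41 (k : ℤ) : eZ 4 1 k = 2 * (k * k) - k := by
  have := two_mul_eZ 4 1 k
  push_cast at this
  nlinarith

lemma hs_phi : HasSum (fun k : ℤ => M (k * k)) phi := by
  have h := hasSum_phi
  simp only [eZ21] at h
  exact h

lemma hs_psi : HasSum (fun k : ℤ => M (2 * (k * k) - k)) psi := by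
  have h := hasSum_psi
  simp only [eZ41] at h
  exact h

lemma two_eps (n : ℕ) : (2 : S4) * (-1) ^ n = 2 := by
  rcases neg_one_pow_eq_or S4 n with h | h <;> rw [h]
  · ring
  · linear_combination -four_S

lemma phi_half : HasSum (fun n : ℕ => (2 : S4) * M ((n : ℤ) * n)) (phi + 1) := by
  have h := hs_phi.nat_add_neg
  simp only [neg_mul_neg, mul_zero, M_zero, ← two_mul] at h
  exact h

lemma phi_alt : E 2 f * (AP (-1) 2 1 * AP (-1) 2 1) = phi := by
  have h := (hasSum_T 2 1 1 (by norm_num) (by norm_num) (by norm_num) (-1) (by simp)).nat_add_neg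
  have h0 : T 2 1 (-1) 0 = 1 := by simp [T, eZ21]
  have h1 : (fun n : ℕ => T 2 1 (-1) (n : ℤ) + T 2 1 (-1) (-(n : ℤ))) =
      fun n : ℕ => (2 : S4) * M ((n : ℤ) * n) := by
    funext n
    simp only [T, eZ21, Int.natAbs_neg, neg_mul_neg, Int.natAbs_natCast, M]
    linear_combination (X ^ ((n : ℤ) * n).toNat) * two_eps n
  rw [h0, h1] at h
  exact add_right_cancel (h.unique phi_half)

/-- A1 -/
lemma f_sq : f ^ 2 = phi * E 2 f := by
  rw [← phi_alt]
  have h := split_f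
  calc f ^ 2 = f * f := by ring
    _ = (AP (-1) 2 1 * E 2 f) * (AP (-1) 2 1 * E 2 f) := by rw [← h]
    _ = _ := by ring

lemma two_phi_add : (2 : S4) * (phi + 1) = 0 := by
  have h := phi_half.mul_left (2 : S4)
  refine h.unique ?_
  have : (fun n : ℕ => (2 : S4) * (2 * M ((n : ℤ) * n))) = fun _ => 0 := by
    funext n
    linear_combination M ((n : ℤ) * n) * four_S
  rw [this]; exact hasSum_zero

lemma two_phi : (2 : S4) * phi = 2 := by
  linear_combination two_phi_add - four_S

lemma phi_sq : phi * phi = 1 := by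
  have h : (phi + 1) * (phi + 1) = 0 := by
    have h := phi_half.mul_left (phi + 1)
    refine h.unique ?_
    have : (fun n : ℕ => (phi + 1) * (2 * M ((n : ℤ) * n))) = fun _ => 0 := by
      funext n
      linear_combination M ((n : ℤ) * n) * two_phi_add
    rw [this]; exact hasSum_zero
  linear_combination h - two_phi_add

/-- A4 -/
lemma phi_split : phi = E 4 phi + 2 * X * E 8 psi := by
  have hX : M 1 = X := by simp [M]
  have hp : HasSum (fun t : ℤ => M ((4 * t - 1) * (4 * t - 1))) (X * E 8 psi) := by
    have h := (hasSum_E 8 hs_psi).mul_left (M 1)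
    rw [hX] at h
    have e : (fun t : ℤ => X * M ((8 : ℕ) * (2 * (t * t) - t))) =
        fun t : ℤ => M ((4 * t - 1) * (4 * t - 1)) := by
      funext t
      rw [← hX, M_mul (by norm_num)]
      · congr 1; push_cast; ring
      · have : 0 ≤ 2 * (t * t) - t := by
          rw [← eZ41]; have := eZ_ge 4 1 (by norm_num) (by norm_num) t; omega
        positivity
    rwa [e] at h
  have ho : HasSum (fun k : ℤ => M ((2 * k + 1) * (2 * k + 1))) (X * E 8 psi + X * E 8 psi) := by
    refine hasSum_split (fun t : ℤ => 2 * t - 1) (fun t : ℤ => -2 * t) ?_ ?_ ?_ ?_ ?_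
    · intro a b h; simp only at h; omega
    · intro a b h; simp only at h; omega
    · intro x
      simp only [Set.mem_range, not_exists]
      constructor
      · rintro ⟨y, hy⟩ z; omega
      · intro h
        have := h (-(x / 2))
        exact ⟨(x + 1) / 2, by omega⟩
    · have e : (fun t : ℤ => M ((2 * (2 * t - 1) + 1) * (2 * (2 * t - 1) + 1))) =
        fun t : ℤ => M ((4 * t - 1) * (4 * t - 1)) := by
        funext t; congr 1; ring
      rw [e]; exact hp
    · have e : (fun t : ℤ => M ((2 * (-2 * t) + 1) * (2 * (-2 * t) + 1))) =
        fun t : ℤ => M ((4 * t - 1) * (4 * t - 1)) := by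
        funext t; congr 1; ring
      rw [e]; exact hp
  have h := hs_phi.unique (hasSum_split (fun t : ℤ => 2 * t) (fun t : ℤ => 2 * t + 1) ?_ ?_ ?_
    (a := E 4 phi) ?_ ho)
  · refine h.trans ?_; ring
  · intro a b h; simp only at h; omega
  · intro a b h; simp only at h; omega
  · intro x
    simp only [Set.mem_range, not_exists]
    constructor
    · rintro ⟨y, hy⟩ z; omega
    · intro h
      have := h (x / 2)
      exact ⟨x / 2, by omega⟩
  · have h := hasSum_E 4 hs_phi
    have e : (fun t : ℤ => M ((4 : ℕ) * (t * t))) = fun t : ℤ => M (2 * t * (2 * t)) := by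
      funext t; congr 1; push_cast; ring
    rwa [e] at h

lemma summable_M2 {e1 e2 : ℤ → ℤ} (h1 : ∀ k : ℤ, (k.natAbs : ℤ) ≤ e1 k) (h2 : ∀ k : ℤ, (k.natAbs : ℤ) ≤ e2 k) :
    Summable (fun x : ℤ × ℤ => M (e1 x.1) * M (e2 x.2)) := by
  rw [WithPiTopology.summable_iff_summable_coeff]
  intro d
  apply summable_of_hasFiniteSupport
  refine Set.Finite.subset (Set.finite_Icc ((-(d : ℤ), -(d : ℤ))) ((d : ℤ), (d : ℤ))) ?_
  rintro ⟨a, b⟩ hx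
  have ha := h1 a
  have hb := h2 b
  rw [Function.mem_support] at hx
  simp only at hx
  rw [M_mul (by omega) (by omega), M, coeff_X_pow] at hx
  have hd : d = (e1 a + e2 b).toNat := by
    by_contra hne
    exact hx (if_neg hne)
  rw [Set.mem_Icc, Prod.mk_le_mk, Prod.mk_le_mk]
  omega

lemma hs_mul {e1 e2 : ℤ → ℤ} (h1 : ∀ k : ℤ, (k.natAbs : ℤ) ≤ e1 k) (h2 : ∀ k : ℤ, (k.natAbs : ℤ) ≤ e2 k)
    {a b : S4} (ha : HasSum (fun k => M (e1 k)) a) (hb : HasSum (fun k => M (e2 k)) b) :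
    HasSum (fun x : ℤ × ℤ => M (e1 x.1 + e2 x.2)) (a * b) := by
  have h := ha.mul hb (summable_M2 h1 h2)
  have e : (fun x : ℤ × ℤ => M (e1 x.1) * M (e2 x.2)) = fun x : ℤ × ℤ => M (e1 x.1 + e2 x.2) := by
    funext x
    have := h1 x.1
    have := h2 x.2
    exact M_mul (by omega) (by omega)
  rwa [e] at h
def g2 (x : ℤ × ℤ) : ℤ × ℤ := (x.1 - 4 * x.2 + 1, x.1 + x.2)

def rot (a b : ℤ) : ℤ × ℤ :=
  if a % 2 = 0 then (if b % 4 = 3 then (a / 2, (b + 1) / 4) else ((-a) / 2, (-b + 1) / 4))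
  else (if a % 4 = 3 then ((-b) / 2, (a + 1) / 4) else (b / 2, (-a + 1) / 4))

def g1 (x : ℤ × ℤ) : ℤ × ℤ := rot (1 - 3 * x.1 - x.2) (3 * x.2 - x.1)

lemma rot_spec (a b : ℤ) (h : (a + b) % 2 = 1) :
    (2 * (rot a b).1 = a ∧ 4 * (rot a b).2 - 1 = b) ∨ (2 * (rot a b).1 = -a ∧ 4 * (rot a b).2 - 1 = -b) ∨
    (2 * (rot a b).1 = -b ∧ 4 * (rot a b).2 - 1 = a) ∨ (2 * (rot a b).1 = b ∧ 4 * (rot a b).2 - 1 = -a) := by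
  unfold rot
  split_ifs <;> simp only <;> omega

lemma rot_uniq (a b s t : ℤ) 
    (h : (2 * s = a ∧ 4 * t - 1 = b) ∨ (2 * s = -a ∧ 4 * t - 1 = -b) ∨
    (2 * s = -b ∧ 4 * t - 1 = a) ∨ (2 * s = b ∧ 4 * t - 1 = -a)) : rot a b = (s, t) := by
  unfold rot
  rcases h with h | h | h | h <;> split_ifs <;> rw [Prod.mk.injEq] <;> omega

lemma g1_spec (x : ℤ × ℤ) :
    (2 * (g1 x).1 = (1 - 3 * x.1 - x.2) ∧ 4 * (g1 x).2 - 1 = (3 * x.2 - x.1)) ∨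
    (2 * (g1 x).1 = -(1 - 3 * x.1 - x.2) ∧ 4 * (g1 x).2 - 1 = -(3 * x.2 - x.1)) ∨
    (2 * (g1 x).1 = -(3 * x.2 - x.1) ∧ 4 * (g1 x).2 - 1 = (1 - 3 * x.1 - x.2)) ∨
    (2 * (g1 x).1 = (3 * x.2 - x.1) ∧ 4 * (g1 x).2 - 1 = -(1 - 3 * x.1 - x.2)) :=
  rot_spec _ _ (by omega)

lemma g1_inj : Function.Injective g1 := by
  intro x y h
  have hx := g1_spec x
  have hy := g1_spec y
  rw [h] at hx
  rw [Prod.ext_iff]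
  rcases hx with hx | hx | hx | hx <;> rcases hy with hy | hy | hy | hy <;> omega

lemma g2_inj : Function.Injective g2 := by
  intro x y h
  simp only [g2, Prod.mk.injEq] at h
  rw [Prod.ext_iff]
  omega

lemma ranges (x : ℤ × ℤ) : x ∈ Set.range g1 ↔ x ∉ Set.range g2 := by
  obtain ⟨s, t⟩ := x
  simp only [Set.mem_range, not_exists]
  constructor
  · rintro ⟨y, hy⟩ z hz
    have h := g1_spec y
    rw [hy] at h
    simp only [g2, Prod.mk.injEq] at hz
    simp only at h
    rcases h with h | h | h | h <;> omega
  · intro h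
    have h5 : (s - t - 1) % 5 ≠ 0 := by
      intro h5
      refine h (t + (s - t - 1) / 5, -((s - t - 1) / 5)) ?_
      simp only [g2, Prod.mk.injEq]
      omega
    have key : ∀ a b : ℤ, (a + 2 * b) % 5 = 1 → (a + b) % 2 = 1 → ((2 * s = a ∧ 4 * t - 1 = b) ∨
        (2 * s = -a ∧ 4 * t - 1 = -b) ∨
        (2 * s = -b ∧ 4 * t - 1 = a) ∨ (2 * s = b ∧ 4 * t - 1 = -a)) → ∃ y, g1 y = (s, t) := by
      intro a b h1 h2 h3
      refine ⟨((3 - 3 * a - b) / 10, (1 - a + 3 * b) / 10), ?_⟩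
      have e1 : 1 - 3 * ((3 - 3 * a - b) / 10) - (1 - a + 3 * b) / 10 = a := by omega
      have e2 : 3 * ((1 - a + 3 * b) / 10) - (3 - 3 * a - b) / 10 = b := by omega
      simp only [g1]
      rw [e1, e2]
      exact rot_uniq a b s t h3
    have : (s - t - 1) % 5 = 1 ∨ (s - t - 1) % 5 = 2 ∨ (s - t - 1) % 5 = 3 ∨ (s - t - 1) % 5 = 4 := by omega
    rcases this with h | h | h | h
    · exact key (4 * t - 1) (-(2 * s)) (by omega) (by omega) (by omega)
    · exact key (-(2 * s)) (-(4 * t - 1)) (by omega) (by omega) (by omega)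
    · exact key (2 * s) (4 * t - 1) (by omega) (by omega) (by omega)
    · exact key (-(4 * t - 1)) (2 * s) (by omega) (by omega) (by omega)

lemma sq_ge (k : ℤ) : (k.natAbs : ℤ) ≤ k * k := by
  rw [← eZ21]; exact eZ_ge 2 1 (by norm_num) (by norm_num) k

lemma psi_ge (k : ℤ) : (k.natAbs : ℤ) ≤ 2 * (k * k) - k := by
  rw [← eZ41]; exact eZ_ge 4 1 (by norm_num) (by norm_num) k

/-- A5 -/
lemma dissection : phi * E 2 psi = th1 * th2 + X * (E 5 phi * E 10 psi) := by
  have hX : M 1 = X := by simp [M]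
  have hL := hs_mul (e1 := fun k => k * k) (e2 := fun k => (2 : ℕ) * (2 * (k * k) - k)) sq_ge
    (fun k => by have := psi_ge k; omega) hs_phi (hasSum_E 2 hs_psi)
  refine hL.unique (hasSum_split g1 g2 g1_inj g2_inj ranges ?_ ?_)
  · have h := hs_mul (eZ_ge 5 1 (by norm_num) (by norm_num)) (eZ_ge 5 2 (by norm_num) (by norm_num))
      hasSum_th1 hasSum_th2
    have e : (fun x : ℤ × ℤ => M (eZ 5 1 x.1 + eZ 5 2 x.2)) = fun x : ℤ × ℤ =>
        M ((g1 x).1 * (g1 x).1 + (2 : ℕ) * (2 * ((g1 x).2 * (g1 x).2) - (g1 x).2)) := by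
      funext x
      congr 1
      have h1 := two_mul_eZ 5 1 x.1
      have h2 := two_mul_eZ 5 2 x.2
      have h3 := g1_spec x
      push_cast at h1 h2 ⊢
      generalize eZ 5 1 x.1 = u at *
      generalize eZ 5 2 x.2 = v at *
      generalize (g1 x).1 = s at *
      generalize (g1 x).2 = t at *
      have h4 : (2 * s) * (2 * s) + (4 * t - 1) * (4 * t - 1) =
        (1 - 3 * x.1 - x.2) * (1 - 3 * x.1 - x.2) + (3 * x.2 - x.1) * (3 * x.2 - x.1) := by
        rcases h3 with ⟨h, h'⟩ | ⟨h, h'⟩ | ⟨h, h'⟩ | ⟨h, h'⟩ <;> rw [h, h'] <;> ring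
      linarith
    rwa [e] at h
  · have h := (hs_mul (e1 := fun k => (5 : ℕ) * (k * k)) (e2 := fun k => (10 : ℕ) * (2 * (k * k) - k))
      (fun k => by have := sq_ge k; omega)
      (fun k => by have := psi_ge k; omega) (hasSum_E 5 hs_phi) (hasSum_E 10 hs_psi)).mul_left (M 1)
    rw [hX] at h
    have e : (fun x : ℤ × ℤ => X * M ((5 : ℕ) * (x.1 * x.1) + (10 : ℕ) * (2 * (x.2 * x.2) - x.2))) =
        fun x : ℤ × ℤ =>
        M ((g2 x).1 * (g2 x).1 + (2 : ℕ) * (2 * ((g2 x).2 * (g2 x).2) - (g2 x).2)) := by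
      funext x
      have := sq_ge x.1
      have := psi_ge x.2
      rw [← hX, M_mul (by norm_num) (by push_cast; omega)]
      congr 1
      simp only [g2]
      push_cast
      ring
    rwa [e] at h
/-- odd part -/
noncomputable def U (F : S4) : S4 := PowerSeries.mk fun n => coeff (2 * n + 1) F

noncomputable def V (F : S4) : S4 := PowerSeries.mk fun n => coeff (2 * n) F

lemma coeff_U (F : S4) (n : ℕ) : coeff n (U F) = coeff (2 * n + 1) F := coeff_mk _ _

lemma U_dec (A B : S4) : U (E 2 A + X * E 2 B) = B := by
  ext n
  rw [coeff_U, map_add, coeff_succ_X_mul, coeff_E, coeff_E, if_neg (by omega), if_pos (by omega), zero_add]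
  congr 2
  omega

lemma dec (F : S4) : F = E 2 (V F) + X * E 2 (U F) := by
  ext n
  obtain ⟨m, rfl | rfl⟩ := Nat.even_or_odd' n
  · rcases m with _ | m
    · rw [map_add, coeff_zero_X_mul, add_zero, coeff_E, if_pos (by norm_num), V, coeff_mk]
    · rw [show 2 * (m + 1) = (2 * m + 1) + 1 by ring, map_add, coeff_succ_X_mul, coeff_E, coeff_E,
        if_pos (by omega), if_neg (by omega), add_zero, V, coeff_mk]
      congr 2
      omega
  · rw [map_add, coeff_succ_X_mul, coeff_E, coeff_E, if_neg (by omega), if_pos (by omega), zero_add, coeff_U]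
    congr 2
    omega

lemma U_mul (A F : S4) : U (F * E 2 A) = U F * A := by
  have h : F * E 2 A = E 2 (V F * A) + X * E 2 (U F * A) := by
    conv_lhs => rw [dec F]
    rw [map_mul, map_mul]; ring
  rw [h, U_dec]

lemma unit_f : IsUnit f := by
  rw [PowerSeries.isUnit_iff_constantCoeff]
  have h : constantCoeff f = 1 := by
    rw [← coeff_zero_eq_constantCoeff_apply]
    have h := coeff_pentagonalSeries_pentagonal (ZMod 4) 0
    simpa [f, pentagonal_def] using h
  rw [h]; exact isUnit_one

lemma unit_E (k : ℕ) [NeZero k] : IsUnit (E k f) := unit_f.map (E k)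

lemma E_two (k : ℕ) [NeZero k] : E k 2 = 2 := map_ofNat _ 2

lemma two_f_sq : 2 * f ^ 2 = 2 * E 2 f := by
  rw [f_sq]
  linear_combination (E 2 f) * two_phi

lemma two_fk_sq (k l : ℕ) [NeZero k] [NeZero l] (h : k * 2 = l) : 2 * (E k f) ^ 2 = 2 * E l f := by
  have h1 := congrArg (E k) two_f_sq
  rwa [map_mul, map_mul, map_pow, E_two, E_E k 2 l h] at h1

lemma two_psi : 2 * psi = 2 * (f * E 2 f) := by
  apply unit_f.mul_right_cancel
  linear_combination 2 * psi_mul_f - (E 2 f) * two_f_sq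

lemma two_H : 2 * (th1 * th2) = 2 * (f * E 5 f) := by
  apply (unit_E 10).mul_right_cancel
  apply unit_f.mul_right_cancel
  have h5 := two_fk_sq 5 10 (by norm_num)
  rw [← G_mul_sq]
  linear_combination 2 * (E 5 f) ^ 2 * G_mul - (E 5 f) ^ 3 * two_f_sq + f ^ 2 * E 5 f * h5

lemma phi5_two : 2 * E 5 phi = 2 := by
  have h := congrArg (E 5) two_phi
  rwa [map_mul, E_two] at h

lemma phi5_sq : E 5 phi * E 5 phi = 1 := by
  have h := congrArg (E 5) phi_sq
  rwa [map_mul, map_one] at h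

lemma f5_sq : (E 5 f) ^ 2 = E 5 phi * E 10 f := by
  have h := congrArg (E 5) f_sq
  rwa [map_mul, map_pow, E_E 5 2 10 (by norm_num)] at h

lemma psi5_mul : E 5 psi * E 5 f = (E 10 f) ^ 2 := by
  have h := congrArg (E 5) psi_mul_f
  rwa [map_mul, map_pow, E_E 5 2 10 (by norm_num)] at h

lemma phi5_split : E 5 phi = E 20 phi + 2 * X ^ 5 * E 40 psi := by
  have h := congrArg (E 5) phi_split
  rwa [map_add, map_mul, map_mul, E_two, E_X, E_E 5 4 20 (by norm_num), E_E 5 8 40 (by norm_num)] at h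

lemma K1 : 2 * (f * E 5 f) = 2 * (E 2 psi + X * E 10 psi) := by
  rw [← two_H]
  linear_combination -2 * dissection + (E 2 psi) * two_phi - X * E 10 psi * phi5_two
    - X * E 10 psi * four_S

lemma K2 : 2 * (E 2 f * E 10 f) = 2 * (E 4 psi + X ^ 2 * E 20 psi) := by
  have h := congrArg (E 2) K1
  rwa [map_mul, map_mul, map_mul, map_add, map_mul, E_two, E_X, E_E 2 5 10 (by norm_num),
    E_E 2 2 4 (by norm_num), E_E 2 10 20 (by norm_num)] at h

lemma G_f10 : G * E 10 f = phi * E 5 phi * E 2 psi - X * E 10 psi := by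
  have h : G * E 5 phi * E 10 f = th1 * th2 := by
    rw [← G_mul_sq, f5_sq]; ring
  linear_combination (-(G * E 10 f) - X * E 10 psi) * phi5_sq + E 5 phi * h - E 5 phi * dissection

lemma phi4_two (k : ℕ) [NeZero k] : 2 * E k phi = 2 := by
  have h := congrArg (E k) two_phi
  rwa [map_mul, E_two] at h

lemma O_f5 : U G * E 5 f = 2 * (E 4 psi + X ^ 2 * E 20 psi) * psi - E 5 psi := by
  have h : G * E 2 (E 5 f) = E 2 (E 2 phi * E 10 phi * psi) +
      X * E 2 (2 * (E 4 psi + X ^ 2 * E 20 psi) * psi - E 5 psi) := by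
    rw [E_E 2 5 10 (by norm_num), G_f10, phi5_split, map_mul, map_mul, map_sub, map_mul, map_mul, map_add,
      map_mul, map_pow, E_X, E_two, E_E 2 2 4 (by norm_num), E_E 2 10 20 (by norm_num), E_E 2 4 8 (by norm_num),
      E_E 2 20 40 (by norm_num), E_E 2 5 10 (by norm_num)]
    have h := phi_split
    have h1 := phi4_two 4
    have h2 := phi4_two 20
    generalize E 4 phi = a at *
    generalize E 20 phi = b at *
    rw [h]
    linear_combination X ^ 6 * E 8 psi * E 40 psi * E 2 psi * four_S + X ^ 5 * E 40 psi * E 2 psi * h1 +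
      X * E 8 psi * E 2 psi * h2
  rw [← U_mul, h, U_dec]

lemma O_eq : U G = 2 * (E 2 f) ^ 2 * (f * E 5 f) - E 5 phi * E 10 f := by
  have h1 : U G * E 5 phi = 2 * E 2 f * psi * E 5 f - E 10 f := by
    apply (unit_E 10).mul_right_cancel
    linear_combination (E 5 f) * O_f5 - U G * f5_sq - psi * E 5 f * K2 - psi5_mul
  linear_combination -U G * phi5_sq + E 5 phi * h1 + (E 2 f * psi * E 5 f) * phi5_two
    + (E 2 f * E 5 f) * two_psi

lemma UO_eq : U (U G) = 2 * (E 5 f * E 4 psi) := by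
  have h : U G = E 2 (2 * f ^ 2 * psi - E 10 phi * E 5 f) +
      X * E 2 (2 * f ^ 2 * E 5 psi - 2 * X ^ 2 * E 20 psi * E 5 f) := by
    rw [O_eq, phi5_split]
    simp only [map_sub, map_mul, map_pow, E_two, E_X]
    rw [E_E 2 10 20 (by norm_num), E_E 2 20 40 (by norm_num), E_E 2 5 10 (by norm_num), E_E 2 5 10 (by norm_num)]
    linear_combination (E 2 f) ^ 2 * K1
  rw [h, U_dec]
  have h5 := congrArg (E 5) two_psi
  rw [map_mul, map_mul, map_mul, E_two, E_E 5 2 10 (by norm_num)] at h5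
  have h6 := two_fk_sq 5 10 (by norm_num)
  linear_combination f ^ 2 * h5 + E 5 f * K2 + (E 5 f * E 10 f) * two_f_sq

theorem coeff_G (K : ℕ) : coeff (4 * K + 3) G = 2 * coeff K (E 5 f * E 4 psi) := by
  have h := congrArg (coeff K) UO_eq
  rw [coeff_U, coeff_U, two_mul (E 5 f * E 4 psi), map_add, ← two_mul] at h
  rw [← h]
  congr 2
  ring
lemma psi_coeff (d : ℕ) (h : coeff d psi ≠ 0) : ∃ t : ℤ, (d : ℤ) = 2 * (t * t) - t := by
  by_contra hne
  push Not at hne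
  apply h
  have h1 := (hs_psi.map (coeff d : S4 →ₗ[ZMod 4] ZMod 4) (WithPiTopology.continuous_coeff (ZMod 4) d))
  refine h1.unique ?_
  have e : ((coeff d : S4 →ₗ[ZMod 4] ZMod 4) ∘ fun k : ℤ => M (2 * (k * k) - k)) = fun _ => 0 := by
    funext k
    have := hne k
    have h2 := psi_ge k
    simp only [Function.comp, M, coeff_X_pow]
    rw [if_neg]
    omega
  rw [e]
  exact hasSum_zero

lemma f_coeff (d : ℕ) (h : coeff d f ≠ 0) : ∃ k : ℤ, 2 * (d : ℤ) = k * (3 * k - 1) := by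
  by_contra hne
  push Not at hne
  apply h
  apply coeff_pentagonalSeries_eq_zero
  rintro ⟨k, rfl⟩
  exact hne k (two_mul_natCast_pentagonal k)

lemma coeff_prod_zero (K : ℕ) (h : ∀ x y : ℤ, 24 * (K : ℤ) + 17 ≠ 12 * x ^ 2 + 5 * y ^ 2) :
    coeff K (E 5 f * E 4 psi) = 0 := by
  rw [coeff_mul]
  refine Finset.sum_eq_zero ?_
  rintro ⟨a, b⟩ hab
  rw [Finset.HasAntidiagonal.mem_antidiagonal] at hab
  simp only at hab ⊢
  by_contra hne
  have h1 := left_ne_zero_of_mul hne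
  have h2 := right_ne_zero_of_mul hne
  rw [coeff_E] at h1 h2
  have ha : 5 ∣ a := by
    by_contra h3; rw [if_neg h3] at h1; exact h1 rfl
  have hb : 4 ∣ b := by
    by_contra h3; rw [if_neg h3] at h2; exact h2 rfl
  rw [if_pos ha] at h1
  rw [if_pos hb] at h2
  obtain ⟨k, hk⟩ := f_coeff _ h1
  obtain ⟨t, ht⟩ := psi_coeff _ h2
  obtain ⟨a', rfl⟩ := ha
  obtain ⟨b', rfl⟩ := hb
  rw [Nat.mul_div_cancel_left _ (by norm_num)] at hk ht
  apply h (4 * t - 1) (6 * k - 1)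
  have hab' : (K : ℤ) = 5 * a' + 4 * b' := by exact_mod_cast hab.symm
  rw [hab']
  linear_combination 60 * hk + 96 * ht

lemma no_rep (c : ℤ) (hc : c % 5 = 1 ∨ c % 5 = 4) : ∀ w : ℕ, 0 < w → ∀ x y : ℤ,
    (w : ℤ) ^ 2 * c ≠ 12 * x ^ 2 + 5 * y ^ 2 := by
  intro w
  induction w using Nat.strong_induction_on with
  | _ w ih =>
    intro hw x y hxy
    have hsq : ∀ z : ℤ, z ^ 2 % 5 = 0 ∧ z % 5 = 0 ∨ z ^ 2 % 5 = 1 ∨ z ^ 2 % 5 = 4 := by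
      intro z
      have : z % 5 = 0 ∨ z % 5 = 1 ∨ z % 5 = 2 ∨ z % 5 = 3 ∨ z % 5 = 4 := by omega
      rcases this with h | h | h | h | h <;> simp [pow_two, Int.mul_emod, h]
    have hL : (w : ℤ) ^ 2 * c % 5 = ((w : ℤ) ^ 2 % 5) * (c % 5) % 5 := Int.mul_emod _ _ _
    rw [hxy] at hL
    have hx := hsq x
    have hww := hsq w
    by_cases h5 : (w : ℤ) % 5 = 0
    · have hx5 : x % 5 = 0 := by
        have hw0 : (w : ℤ) ^ 2 % 5 = 0 := by simp [pow_two, Int.mul_emod, h5]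
        rw [hw0, zero_mul] at hL
        omega
      obtain ⟨x', rfl⟩ := Int.dvd_of_emod_eq_zero hx5
      obtain ⟨v, rfl⟩ : 5 ∣ w := by omega
      push_cast at hxy
      have hy : 5 * ((v : ℤ) ^ 2 * c - 12 * x' ^ 2) = y ^ 2 := by linarith
      have hy5 : y % 5 = 0 := by
        have := hsq y
        omega
      obtain ⟨y', rfl⟩ := Int.dvd_of_emod_eq_zero hy5
      exact ih v (by omega) (by omega) x' y' (by linarith)
    · rcases hww with h | h | h
      · exact h5 h.2
      all_goals
        rw [h] at hL
        rcases hc with hc | hc <;> rw [hc] at hL <;> omega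

lemma p_sq (p : ℕ) (hp : p.Prime) (h5 : 5 ≤ p) : p ^ 2 % 24 = 1 := by
  have h2 : ¬ 2 ∣ p := fun h => by
    have := (Nat.prime_dvd_prime_iff_eq Nat.prime_two hp).mp h; omega
  have h3 : ¬ 3 ∣ p := fun h => by
    have := (Nat.prime_dvd_prime_iff_eq Nat.prime_three hp).mp h; omega
  have h : p % 24 = 1 ∨ p % 24 = 5 ∨ p % 24 = 7 ∨ p % 24 = 11 ∨ p % 24 = 13 ∨ p % 24 = 17 ∨ p % 24 = 19 ∨
    p % 24 = 23 := by omega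
  rcases h with h | h | h | h | h | h | h | h <;> simp [Nat.pow_mod, h]

lemma main_zero (N : ℕ) (K : ℕ) (hN : N = 4 * K + 3)
    (h : ∀ x y : ℤ, 24 * (K : ℤ) + 17 ≠ 12 * x ^ 2 + 5 * y ^ 2) : b5' N ≡ 0 [MOD 4] := by
  subst hN
  have h1 := coeff_G K
  rw [coeff_prod_zero K h, mul_zero, G, coeff_mk] at h1
  rw [← ZMod.natCast_eq_natCast_iff, h1, Nat.cast_zero]

end B5

theorem b5'_even_power_family (p : ℕ) [Fact p.Prime] (hp : 5 ≤ p)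
    (hleg : legendreSym p 3 ≠ legendreSym p (-5)) :
    ∀ n α : ℕ, ∀ j ∈ ({1, 3} : Finset ℕ),
      b5' (4 * p ^ (2 * α) * (5 * n + j) + (17 * p ^ (2 * α) + 1) / 6) ≡ 0 [MOD 4] := by
  intro n α j hj
  have hp' : p.Prime := Fact.out
  have hQ : p ^ (2 * α) % 24 = 1 := by
    rw [pow_mul, Nat.pow_mod, B5.p_sq p hp' hp, one_pow, Nat.one_mod]
  obtain ⟨r, hr⟩ : ∃ r, p ^ (2 * α) = 24 * r + 1 := ⟨p ^ (2 * α) / 24, by omega⟩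
  refine B5.main_zero _ ((24 * r + 1) * (5 * n + j) + 17 * r) ?_ ?_
  · rw [hr, show (17 * (24 * r + 1) + 1) / 6 = 68 * r + 3 by omega]
    ring
  · intro x y hxy
    have hc : (24 * (5 * n + j) + 17 : ℤ) % 5 = 1 ∨ (24 * (5 * n + j) + 17 : ℤ) % 5 = 4 := by
      simp only [Finset.mem_insert, Finset.mem_singleton] at hj
      rcases hj with rfl | rfl <;> omega
    refine B5.no_rep _ hc (p ^ α) (pow_pos hp'.pos _) x y ?_
    have hr' : ((p ^ α : ℕ) : ℤ) ^ 2 = 24 * r + 1 := by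
      rw [← Nat.cast_pow, ← pow_mul, mul_comm α 2, hr]; push_cast; ring
    rw [hr', ← hxy]
    push_cast
    ring
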